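/- arXiv:1711.03706 — 2 statements merged into one kernel-verified Lean document; each statement's English description precedes it below -/
import Mathlib

section
/- The derivations X₀' := X₀, X₁' := X_{E 1}, X₂' := −X_{E (−1)} satisfy the relations ⁅X₀', X₁'⁆ = X₁', ⁅X₀', X₂'⁆ = −X₂', ⁅X₁',⁅X₁',⁅X₁', X₂'⁆⁆⁆ = 0 and ⁅X₂',⁅X₂',⁅X₂', X₁'⁆⁆⁆ = 0 (the Serre relations of the Kac–Moody algebra A₁⁽¹⁾). -/
/-!
The argument rests on two facts. First, a derivation of `QP` that kills every `E q`, kills `u₁` and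
commutes with `D` is zero, because `u_{n+1} = D uₙ` (`eq_zero_of_comm_D`). Second,
`⁅D, X_f⁆ = -f • X₀`.

Write `X = X_{E q}`, `Y = X_{E (-q)}`, so that `⁅X₀, X⁆ = q X` and `⁅X₀, Y⁆ = -q Y`. Since `X` and `Y`
kill every `E r`, the Leibniz and Jacobi identities give successively
`⁅D, ⁅X, Y⁆⁆ = q (E q • Y + E (-q) • X)`, `⁅D, ⁅X, ⁅X, Y⁆⁆⁆ = q E q • ⁅X, Y⁆` and
`⁅D, ⁅X, ⁅X, ⁅X, Y⁆⁆⁆⁆ = 0`. An iterated bracket of `X` and `Y` kills each `E r`, and it kills `u₁`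
because `X u₁ = E q` and `Y u₁ = E (-q)`; so the triple bracket vanishes by the first fact. The
cases `q = 1` and `q = -1` are the two Serre relations.
-/

set_option synthInstance.maxHeartbeats 1000000
set_option maxHeartbeats 1000000

noncomputable section

/-- The algebra of "quasipolynomials": the group algebra of `ℤ` (group element `q`
modelling `e^{q·u}`) with coefficients in polynomials in countably many variables
(variable of index `n-1` modelling the `n`-th `x`-derivative of `u`). -/
abbrev QP : Type := AddMonoidAlgebra (MvPolynomial ℕ ℂ) ℤ

/-- `E q` models `e^{q·u}`. -/
def E (q : ℤ) : QP := AddMonoidAlgebra.single q 1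

/-- `uvar n` models the `n`-th derivative `∂ⁿu/∂xⁿ` (for `n ≥ 1`); it is the
polynomial generator of index `n - 1`. -/
def uvar (n : ℕ) : QP := AddMonoidAlgebra.single 0 (MvPolynomial.X (n - 1))

/-- `D` is the total `x`-derivative: the unique `ℂ`-derivation of `QP` with
`D uₙ = u_{n+1}` for `n ≥ 1` and `D (E q) = q • (u₁ * E q)`. -/
def IsD (D : Derivation ℂ QP QP) : Prop :=
  (∀ n : ℕ, 1 ≤ n → D (uvar n) = uvar (n + 1)) ∧
  (∀ q : ℤ, D (E q) = q • (uvar 1 * E q))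

/-- `X₀` models `∂/∂u`: the unique `ℂ`-derivation with `X₀ uₙ = 0` and `X₀ (E q) = q • E q`. -/
def IsX0 (X : Derivation ℂ QP QP) : Prop :=
  (∀ n : ℕ, 1 ≤ n → X (uvar n) = 0) ∧ (∀ q : ℤ, X (E q) = q • E q)

/-- `X_f` is the unique `ℂ`-derivation with `X_f (E q) = 0` for all `q` and
`X_f uₙ = D^[n-1] f` for all `n ≥ 1`. -/
def IsXf (D : Derivation ℂ QP QP) (f : QP) (Xf : Derivation ℂ QP QP) : Prop :=
  (∀ q : ℤ, Xf (E q) = 0) ∧ (∀ n : ℕ, 1 ≤ n → Xf (uvar n) = (⇑D)^[n - 1] f)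

/-- `QP` is generated as a `ℂ`-algebra by the `E q` and the `uₙ` with `n ≥ 1`. -/
lemma adjoin_generators :
    Algebra.adjoin ℂ (Set.range E ∪ uvar '' {n | 1 ≤ n}) = ⊤ := by
  set S := Algebra.adjoin ℂ (Set.range E ∪ uvar '' {n | 1 ≤ n}) with hS
  have hE : ∀ q, E q ∈ S := fun q => Algebra.subset_adjoin (Or.inl ⟨q, rfl⟩)
  have hcoeff : ∀ p : MvPolynomial ℕ ℂ, (AddMonoidAlgebra.single 0 p : QP) ∈ S := by
    intro p
    induction p using MvPolynomial.induction_on with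
    | C a => exact S.algebraMap_mem a
    | add p r hp hr =>
      rw [AddMonoidAlgebra.single_add]
      exact S.add_mem hp hr
    | mul_X p n hp =>
      have hu : uvar (n + 1) ∈ S :=
        Algebra.subset_adjoin (Or.inr ⟨n + 1, Nat.le_add_left 1 n, rfl⟩)
      have h : (AddMonoidAlgebra.single 0 (p * MvPolynomial.X n) : QP)
          = AddMonoidAlgebra.single 0 p * uvar (n + 1) := by
        simp [uvar]
      rw [h]
      exact S.mul_mem hp hu
  rw [eq_top_iff]
  rintro x -
  induction x using AddMonoidAlgebra.induction_linear with
  | zero => exact S.zero_mem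
  | add f g hf hg => exact S.add_mem hf hg
  | single q p =>
    have h : (AddMonoidAlgebra.single q p : QP) = AddMonoidAlgebra.single 0 p * E q := by
      simp [E]
    rw [h]
    exact S.mul_mem (hcoeff p) (hE q)

lemma QP_derivation_ext {X Y : Derivation ℂ QP QP} (hE : ∀ q, X (E q) = Y (E q))
    (hu : ∀ n, 1 ≤ n → X (uvar n) = Y (uvar n)) : X = Y := by
  refine Derivation.ext_of_adjoin_eq_top _ adjoin_generators ?_
  rintro _ (⟨q, rfl⟩ | ⟨n, hn, rfl⟩)
  · exact hE q
  · exact hu n hn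

lemma eq_zero_of_comm_D {D Z : Derivation ℂ QP QP} (hD : IsD D) (hE : ∀ q, Z (E q) = 0)
    (hu : Z (uvar 1) = 0) (hc : ⁅D, Z⁆ = 0) : Z = 0 := by
  refine QP_derivation_ext hE fun n hn => ?_
  induction n, hn using Nat.le_induction with
  | base => exact hu
  | succ n hn ih =>
    have h := DFunLike.congr_fun hc (uvar n)
    rw [Derivation.commutator_apply, hD.1 n hn, ih] at h
    simpa using h

section Leibniz

variable {A : Type*} [CommRing A] [Algebra ℂ A]

lemma derivation_lie_smul (X Y : Derivation ℂ A A) (g : A) :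
    ⁅X, g • Y⁆ = X g • Y + g • ⁅X, Y⁆ := by
  ext a
  simp [Derivation.commutator_apply]
  ring

lemma derivation_smul_lie (X Y : Derivation ℂ A A) (g : A) :
    ⁅g • X, Y⁆ = g • ⁅X, Y⁆ - Y g • X := by
  ext a
  simp [Derivation.commutator_apply]
  ring

/-- In `⁅D, ⁅X, ⁅X, ⁅X, Y⁆⁆⁆⁆` the two contributions `∓ k e • ⁅X, ⁅X, Y⁆⁆` cancel: one comes from
`⁅D, X⁆ = -e X₀` and the `X₀`-weight `k` of `⁅X, ⁅X, Y⁆⁆`, the other from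
`⁅D, ⁅X, ⁅X, Y⁆⁆⁆ = k e • ⁅X, Y⁆`. -/
lemma D_comm_triple {D X0 X Y : Derivation ℂ A A} {e f : A} {k : ℤ}
    (hX : ⁅X0, X⁆ = k • X) (hY : ⁅X0, Y⁆ = -(k • Y))
    (hDX : ⁅D, X⁆ = -(e • X0)) (hDY : ⁅D, Y⁆ = -(f • X0))
    (hXe : X e = 0) (hXf : X f = 0) (hYe : Y e = 0) :
    ⁅D, ⁅X, ⁅X, ⁅X, Y⁆⁆⁆⁆ = 0 := by
  have hX' : ⁅X, X0⁆ = -(k • X) := by rw [← lie_skew, hX]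
  have h01 : ⁅X0, ⁅X, Y⁆⁆ = 0 := by
    rw [leibniz_lie, hX, hY, zsmul_lie, lie_neg, lie_zsmul, add_neg_cancel]
  have h02 : ⁅X0, ⁅X, ⁅X, Y⁆⁆⁆ = k • ⁅X, ⁅X, Y⁆⁆ := by
    rw [leibniz_lie, hX, h01, zsmul_lie, lie_zero, add_zero]
  have hW1 : ⁅X, Y⁆ e = 0 := by simp [Derivation.commutator_apply, hXe, hYe]
  have hW2 : ⁅X, ⁅X, Y⁆⁆ e = 0 := by rw [Derivation.commutator_apply, hW1, hXe]; simp
  have h1 : ⁅D, ⁅X, Y⁆⁆ = k • (e • Y + f • X) := by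
    rw [leibniz_lie, hDX, hDY, neg_lie, lie_neg, derivation_smul_lie, derivation_lie_smul,
      hY, hYe, hXf, hX', zero_smul, smul_neg, smul_neg, smul_add, smul_comm e k,
      smul_comm f k]
    abel
  have h2 : ⁅D, ⁅X, ⁅X, Y⁆⁆⁆ = k • (e • ⁅X, Y⁆) := by
    rw [leibniz_lie, hDX, h1, neg_lie, derivation_smul_lie, h01, hW1, lie_zsmul, lie_add,
      derivation_lie_smul, derivation_lie_smul, hXe, hXf, lie_self]
    simp
  rw [leibniz_lie, hDX, h2, neg_lie, derivation_smul_lie, h02, hW2, lie_zsmul,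
    derivation_lie_smul, hXe, smul_comm e k]
  simp

end Leibniz

lemma D_comm_X0 {D X0 : Derivation ℂ QP QP} (hD : IsD D) (hX0 : IsX0 X0) : ⁅D, X0⁆ = 0 := by
  refine QP_derivation_ext (fun q => ?_) fun n hn => ?_
  · rw [Derivation.commutator_apply, hX0.2, hD.2, map_zsmul, map_zsmul, hD.2, Derivation.leibniz,
      hX0.2, hX0.1 1 le_rfl]
    simp
    ring
  · rw [Derivation.commutator_apply, hX0.1 n hn, hD.1 n hn, hX0.1 (n + 1) (by lia)]
    simp

lemma D_comm_Xf {D X0 X : Derivation ℂ QP QP} {f : QP} (hD : IsD D) (hX0 : IsX0 X0)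
    (hX : IsXf D f X) : ⁅D, X⁆ = -(f • X0) := by
  refine QP_derivation_ext (fun q => ?_) fun n hn => ?_
  · rw [Derivation.commutator_apply, hX.1, hD.2, map_zsmul, Derivation.leibniz, hX.1,
      hX.2 1 le_rfl, Derivation.neg_apply, Derivation.smul_apply, hX0.2]
    simp
    ring
  · rw [Derivation.commutator_apply, hX.2 n hn, hD.1 n hn, hX.2 (n + 1) (by lia),
      Derivation.neg_apply, Derivation.smul_apply, hX0.1 n hn]
    obtain ⟨m, rfl⟩ := Nat.exists_eq_add_of_le' hn
    simp [Function.iterate_succ_apply']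

lemma X0_comm_Xf {D X0 X : Derivation ℂ QP QP} {k : ℤ} (hD : IsD D) (hX0 : IsX0 X0)
    (hX : IsXf D (E k) X) : ⁅X0, X⁆ = k • X := by
  have hcomm : ∀ a, X0 (D a) = D (X0 a) := fun a => by
    have h := DFunLike.congr_fun (D_comm_X0 hD hX0) a
    rw [Derivation.commutator_apply] at h
    exact (sub_eq_zero.mp h).symm
  have hit : ∀ m : ℕ, X0 ((⇑D)^[m] (E k)) = k • (⇑D)^[m] (E k) := fun m => by
    induction m with
    | zero => exact hX0.2 k
    | succ m ih => rw [Function.iterate_succ_apply', hcomm, ih, map_zsmul]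
  refine QP_derivation_ext (fun q => ?_) fun n hn => ?_
  · rw [Derivation.commutator_apply, hX.1, hX0.2, map_zsmul, Derivation.smul_apply, hX.1]
    simp
  · rw [Derivation.commutator_apply, hX.2 n hn, hX0.1 n hn, hit, Derivation.smul_apply, hX.2 n hn]
    simp

lemma serre_triple {D X0 X Y : Derivation ℂ QP QP} {k : ℤ} (hD : IsD D) (hX0 : IsX0 X0)
    (hX : IsXf D (E k) X) (hY : IsXf D (E (-k)) Y) : ⁅X, ⁅X, ⁅X, Y⁆⁆⁆ = 0 := by
  have hXu : X (uvar 1) = E k := hX.2 1 le_rfl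
  have hYu : Y (uvar 1) = E (-k) := hY.2 1 le_rfl
  refine eq_zero_of_comm_D hD (fun q => ?_) ?_
    (D_comm_triple (k := k) (X0_comm_Xf hD hX0 hX) ?_ (D_comm_Xf hD hX0 hX) (D_comm_Xf hD hX0 hY)
      (hX.1 _) (hX.1 _) (hY.1 _))
  · simp only [Derivation.commutator_apply, hX.1, hY.1, map_zero, sub_zero]
  · simp only [Derivation.commutator_apply, hXu, hYu, hX.1, hY.1, map_zero, sub_zero]
  · rw [X0_comm_Xf hD hX0 hY, neg_smul]


/-- The generators `X₀' = X₀`, `X₁' = X_{E 1}`, `X₂' = -X_{E (-1)}` of the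
characteristic Lie algebra of the sinh-Gordon equation satisfy the Serre relations
of the Kac–Moody algebra `A₁⁽¹⁾`. -/
theorem stmt_5 (D X0 X1 Xm X2 : Derivation ℂ QP QP) (hD : IsD D) (hX0 : IsX0 X0)
    (hX1 : IsXf D (E 1) X1) (hXm : IsXf D (E (-1)) Xm) (hX2 : X2 = -Xm) :
    ⁅X0, X1⁆ = X1 ∧ ⁅X0, X2⁆ = -X2 ∧
    ⁅X1, ⁅X1, ⁅X1, X2⁆⁆⁆ = 0 ∧ ⁅X2, ⁅X2, ⁅X2, X1⁆⁆⁆ = 0 := by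
  subst hX2
  have h := serre_triple hD hX0 hX1 hXm
  have h' := serre_triple (k := -1) hD hX0 hXm (by rwa [neg_neg])
  -- Negation on `Derivation ℂ QP QP` elaborates through an instance path that agrees with the one
  -- in `lie_neg`, `neg_lie` and `neg_zero` only up to unfolding, so these are restated here.
  have hln : ∀ U V : Derivation ℂ QP QP, ⁅U, -V⁆ = -⁅U, V⁆ := fun U V => lie_neg U V
  have hnl : ∀ U V : Derivation ℂ QP QP, ⁅-U, V⁆ = -⁅U, V⁆ := fun U V => neg_lie U V
  have hn0 : -(0 : Derivation ℂ QP QP) = 0 := neg_zero (G := Derivation ℂ QP QP)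
  refine ⟨?_, ?_, ?_, ?_⟩
  · rw [X0_comm_Xf hD hX0 hX1, one_smul]
  · rw [hln, X0_comm_Xf hD hX0 hXm, neg_smul, one_smul]
  · rw [hln, hln, hln, h, hn0]
  · simp only [hnl, hln, h', hn0]
end
end

section
/- For every k ≥ 0 the derivations X'_{3k+1}, X'_{3k+2}, X'_{3k+3} are nonzero and satisfy ⁅D, X'_{3k+1}⁆ = −(E 1) • X'_{3k}, ⁅D, X'_{3k+2}⁆ = (E (−1)) • X'_{3k}, and ⁅D, X'_{3k+3}⁆ = −(E (−1)) • X'_{3k+1} + (E 1) • X'_{3k+2}. -/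
/-!
Write `A = X'_{3k+1}`, `B = X'_{3k+2}`, `C = X'_{3k+3}`, `P = X'_{3k}`. All of `A`, `B`, `C`
annihilate the exponentials `E q`, and a derivation that does so and commutes with `D` is zero
(`eq_zero_of_lie_D`). Given the commutators of `A`, `B`, `C` with `D`, the Jacobi identity and the
weights under `⁅X₀, ·⁆` show that `⁅X'₁, A⁆`, `⁅X'₂, B⁆` and `⁅X'₂, A⁆ + C` commute with `D`, hence
vanish (`Level.relA`, `Level.relB`, `Level.relC`). These three relations are exactly what is needed
to compute the commutators with `D` at the next level, again by the Jacobi identity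
(`Level.step`).

Nonvanishing comes from leading terms. Since `Z uₙ₊₁ = D (Z uₙ) - ⁅D, Z⁆ uₙ`, the commutator
formulas give inductively that `A` and `B` vanish on `u₁, …, u_{2k}` and `C` on `u₁, …, u_{2k+1}`,
while `A u_{2k+1} = 2^k E 1`, `B u_{2k+1} = -2^k E (-1)` and `C u_{2k+2} = 2^{k+1}`.
-/

set_option synthInstance.maxHeartbeats 1000000
set_option maxHeartbeats 1000000

noncomputable section

lemma E_mul_E (p q : ℤ) : E p * E q = E (p + q) := by
  rw [E, E, E, AddMonoidAlgebra.single_mul_single, one_mul]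

lemma E_zero : E 0 = 1 := rfl

lemma E_ne_zero (q : ℤ) : E q ≠ 0 := by
  intro h
  have h1 : E q * E (-q) = 1 := by rw [E_mul_E, add_neg_cancel, E_zero]
  rw [h, zero_mul] at h1
  exact zero_ne_one h1

/-- The elements `E q` and `uₙ` with `n ≥ 1` generate `QP`, so a derivation is determined by its
values on them. -/
lemma der_eq_zero (Z : Derivation ℂ QP QP) (hE : ∀ q, Z (E q) = 0)
    (hu : ∀ n, 1 ≤ n → Z (uvar n) = 0) : Z = 0 := by
  have hp : ∀ p : MvPolynomial ℕ ℂ, Z (AddMonoidAlgebra.single 0 p) = 0 := by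
    intro p
    induction p using MvPolynomial.induction_on with
    | C a =>
      have h : (AddMonoidAlgebra.single 0 (MvPolynomial.C a) : QP) = algebraMap ℂ QP a := rfl
      rw [h, Z.map_algebraMap]
    | add p q hp hq => rw [AddMonoidAlgebra.single_add, map_add, hp, hq, add_zero]
    | mul_X p n hp =>
      have h : (AddMonoidAlgebra.single 0 (p * MvPolynomial.X n) : QP)
          = AddMonoidAlgebra.single 0 p * uvar (n + 1) := by
        simp [uvar]
      rw [h, Z.leibniz, hp, hu _ (by omega), smul_zero, smul_zero, add_zero]
  apply Derivation.ext
  intro f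
  induction f using AddMonoidAlgebra.induction_linear with
  | zero => simp
  | add f g hf hg => rw [map_add, hf, hg]; simp
  | single q p =>
    have h : (AddMonoidAlgebra.single q p : QP) = AddMonoidAlgebra.single 0 p * E q := by
      simp [E]
    rw [h, Z.leibniz, hp, hE]
    simp

/-! ### Lie algebra identities in `Derivation ℂ QP QP` -/

/-! The generic Lie ring lemmas do not rewrite here, because the additive structure they find on
`Derivation ℂ QP QP` agrees with `Derivation.instNeg` and its siblings only after unfolding. Their
instances for derivations are therefore proved pointwise. -/

lemma der_lie_neg (X Y : Derivation ℂ QP QP) : ⁅X, -Y⁆ = -⁅X, Y⁆ := by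
  apply Derivation.ext
  intro a
  simp only [Derivation.commutator_apply, Derivation.neg_apply, map_neg]
  ring

lemma der_neg_lie (X Y : Derivation ℂ QP QP) : ⁅-X, Y⁆ = -⁅X, Y⁆ := by
  apply Derivation.ext
  intro a
  simp only [Derivation.commutator_apply, Derivation.neg_apply, map_neg]
  ring

lemma der_lie_add (X Y Z : Derivation ℂ QP QP) : ⁅X, Y + Z⁆ = ⁅X, Y⁆ + ⁅X, Z⁆ := by
  apply Derivation.ext
  intro a
  simp only [Derivation.commutator_apply, Derivation.add_apply, map_add]
  ring

lemma der_lie_zero (X : Derivation ℂ QP QP) : ⁅X, (0 : Derivation ℂ QP QP)⁆ = 0 := by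
  apply Derivation.ext
  intro a
  simp only [Derivation.commutator_apply, Derivation.zero_apply, map_zero]
  ring

lemma der_lie_skew (X Y : Derivation ℂ QP QP) : -⁅Y, X⁆ = ⁅X, Y⁆ := by
  apply Derivation.ext
  intro a
  simp only [Derivation.commutator_apply, Derivation.neg_apply]
  ring

lemma der_jacobi (X Y Z : Derivation ℂ QP QP) : ⁅X, ⁅Y, Z⁆⁆ = ⁅⁅X, Y⁆, Z⁆ + ⁅Y, ⁅X, Z⁆⁆ := by
  apply Derivation.ext
  intro a
  simp only [Derivation.commutator_apply, Derivation.add_apply, map_sub]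
  ring

lemma der_neg_neg (X : Derivation ℂ QP QP) : - -X = X := by
  apply Derivation.ext
  intro a
  simp only [Derivation.neg_apply]
  ring

lemma der_add_neg (X : Derivation ℂ QP QP) : X + -X = 0 := by
  apply Derivation.ext
  intro a
  simp only [Derivation.add_apply, Derivation.neg_apply, Derivation.zero_apply]
  ring

lemma der_eq_neg {X Y : Derivation ℂ QP QP} (h : X + Y = 0) : X = -Y := by
  apply Derivation.ext
  intro a
  have h1 := congrArg (fun Z : Derivation ℂ QP QP => Z a) h
  simp only [Derivation.add_apply, Derivation.zero_apply] at h1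
  rw [Derivation.neg_apply]
  linear_combination h1

lemma lie_fsmul (X Y : Derivation ℂ QP QP) (f : QP) :
    ⁅X, f • Y⁆ = X f • Y + f • ⁅X, Y⁆ := by
  apply Derivation.ext
  intro a
  simp only [Derivation.commutator_apply, Derivation.smul_apply, Derivation.add_apply,
    Derivation.leibniz, smul_eq_mul]
  ring

lemma fsmul_lie (X Y : Derivation ℂ QP QP) (f : QP) :
    ⁅f • X, Y⁆ = f • ⁅X, Y⁆ - Y f • X := by
  apply Derivation.ext
  intro a
  simp only [Derivation.commutator_apply, Derivation.smul_apply, Derivation.sub_apply,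
    Derivation.leibniz, smul_eq_mul]
  ring

lemma bracket_E {X Y : Derivation ℂ QP QP} (hX : ∀ q, X (E q) = 0) (hY : ∀ q, Y (E q) = 0)
    (q : ℤ) : ⁅X, Y⁆ (E q) = 0 := by
  rw [Derivation.commutator_apply, hX, hY, map_zero, map_zero, sub_zero]

/-- For `Z` annihilating every `E q`, the value `Z u₁` can be read off from `⁅D, Z⁆ (E 1)`. -/
lemma apply_uvar_one {D Z : Derivation ℂ QP QP} (hD : IsD D) (hZ : ∀ q, Z (E q) = 0)
    (h : ⁅D, Z⁆ (E 1) = 0) : Z (uvar 1) = 0 := by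
  rw [Derivation.commutator_apply, hZ, hD.2, map_zero, one_smul, Z.leibniz, hZ, smul_zero,
    zero_add, zero_sub, neg_eq_zero, smul_eq_mul] at h
  have h1 : E 1 * E (-1) = 1 := by rw [E_mul_E, add_neg_cancel, E_zero]
  calc Z (uvar 1) = (E 1 * Z (uvar 1)) * E (-1) := by rw [mul_right_comm, h1, one_mul]
    _ = 0 := by rw [h, zero_mul]

lemma apply_uvar_succ {D : Derivation ℂ QP QP} (hD : IsD D) (Z : Derivation ℂ QP QP) (n : ℕ)
    (hn : 1 ≤ n) : Z (uvar (n + 1)) = D (Z (uvar n)) - ⁅D, Z⁆ (uvar n) := by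
  rw [Derivation.commutator_apply, hD.1 n hn, sub_sub_cancel]

/-- A derivation that annihilates every `E q` and commutes with `D` vanishes: `⁅D, Z⁆ (E 1) = 0`
forces `Z u₁ = 0`, and then `Z uₙ₊₁ = D (Z uₙ)`. -/
lemma eq_zero_of_lie_D {D Z : Derivation ℂ QP QP} (hD : IsD D) (hZ : ∀ q, Z (E q) = 0)
    (h : ⁅D, Z⁆ = 0) : Z = 0 := by
  refine der_eq_zero Z hZ fun n hn => ?_
  induction n, hn using Nat.le_induction with
  | base => exact apply_uvar_one hD hZ (by rw [h]; rfl)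
  | succ n hn ih => rw [apply_uvar_succ hD Z n hn, ih, h, map_zero]; simp

/-! ### The levels of the sequence -/

/-- The properties of `X₀`, `X₁ = X'₁` and `X₂ = X'₂` used at every level: `X₁` and `X₂` annihilate
the `E q`, have weights `1` and `-1` under `⁅X₀, ·⁆`, and have the expected commutators with `D`. -/
structure Base (D X0 X1 X2 : Derivation ℂ QP QP) : Prop where
  isD : IsD D
  E1 : ∀ q, X1 (E q) = 0
  E2 : ∀ q, X2 (E q) = 0
  w1 : ⁅X0, X1⁆ = X1
  w2 : ⁅X0, X2⁆ = -X2
  D1 : ⁅D, X1⁆ = -(E 1 • X0)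
  D2 : ⁅D, X2⁆ = E (-1) • X0

/-- The invariant of the `k`-th level of the sequence, `P = X'_{3k}`, `A = X'_{3k+1}`,
`B = X'_{3k+2}`, `C = X'_{3k+3}`: the recursion and, for `A` and `B`, the vanishing on the `E q`,
the weights `1` and `-1` under `⁅X₀, ·⁆`, the commutators with `D`, and the leading term, that is
the first `uₙ` on which the derivation does not vanish together with its value there. The
corresponding properties of `C` follow. Nothing is required of `P` on the `E q`, since `P = X₀`
at level `0`. -/
structure Level (D X0 X1 X2 : Derivation ℂ QP QP) (k : ℕ) (P A B C : Derivation ℂ QP QP) :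
    Prop where
  hA : A = -⁅X1, P⁆
  hB : B = ⁅X2, P⁆
  hC : C = ⁅X1, B⁆
  EA : ∀ q, A (E q) = 0
  EB : ∀ q, B (E q) = 0
  wA : ⁅X0, A⁆ = A
  wB : ⁅X0, B⁆ = -B
  DA : ⁅D, A⁆ = -(E 1 • P)
  DB : ⁅D, B⁆ = E (-1) • P
  lowA : ∀ n, 1 ≤ n → n ≤ 2 * k → A (uvar n) = 0
  lowB : ∀ n, 1 ≤ n → n ≤ 2 * k → B (uvar n) = 0
  topA : A (uvar (2 * k + 1)) = 2 ^ k * E 1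
  topB : B (uvar (2 * k + 1)) = -(2 ^ k * E (-1))

namespace Level

variable {D X0 X1 X2 P A B C : Derivation ℂ QP QP} {k : ℕ}

lemma EC (b : Base D X0 X1 X2) (l : Level D X0 X1 X2 k P A B C) (q : ℤ) : C (E q) = 0 := by
  rw [l.hC]; exact bracket_E b.E1 l.EB q

lemma wC (b : Base D X0 X1 X2) (l : Level D X0 X1 X2 k P A B C) : ⁅X0, C⁆ = 0 := by
  rw [l.hC, der_jacobi, b.w1, l.wB, der_lie_neg, der_add_neg]

lemma DC (b : Base D X0 X1 X2) (l : Level D X0 X1 X2 k P A B C) :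
    ⁅D, C⁆ = -(E (-1) • A) + E 1 • B := by
  have h : ⁅X1, P⁆ = -A := by rw [l.hA, der_neg_neg]
  rw [l.hC, der_jacobi, b.D1, l.DB, lie_fsmul, der_neg_lie, fsmul_lie, b.E1, l.EB, l.wB, h]
  apply Derivation.ext
  intro a
  simp only [Derivation.neg_apply, Derivation.add_apply, Derivation.sub_apply,
    Derivation.smul_apply, smul_eq_mul]
  ring

/-- The commutator of `D` with `⁅X₁, A⁆` is `-E₁ ⁅X₀, A⁆ - E₁ ⁅X₁, P⁆ = -E₁ A + E₁ A = 0`, where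
`E₁ = E 1`. -/
lemma relA (b : Base D X0 X1 X2) (l : Level D X0 X1 X2 k P A B C) : ⁅X1, A⁆ = 0 := by
  refine eq_zero_of_lie_D b.isD (bracket_E b.E1 l.EA) ?_
  have h : ⁅X1, P⁆ = -A := by rw [l.hA, der_neg_neg]
  rw [der_jacobi, b.D1, l.DA, der_lie_neg, lie_fsmul, der_neg_lie, fsmul_lie, b.E1, l.EA, l.wA, h]
  apply Derivation.ext
  intro a
  simp only [Derivation.neg_apply, Derivation.add_apply, Derivation.sub_apply,
    Derivation.smul_apply, Derivation.zero_apply, smul_eq_mul]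
  ring

lemma relB (b : Base D X0 X1 X2) (l : Level D X0 X1 X2 k P A B C) : ⁅X2, B⁆ = 0 := by
  refine eq_zero_of_lie_D b.isD (bracket_E b.E2 l.EB) ?_
  rw [der_jacobi, b.D2, l.DB, lie_fsmul, fsmul_lie, b.E2, l.EB, l.wB, ← l.hB]
  apply Derivation.ext
  intro a
  simp only [Derivation.neg_apply, Derivation.add_apply, Derivation.sub_apply,
    Derivation.smul_apply, Derivation.zero_apply, smul_eq_mul]
  ring

/-- The derivations `⁅X₂, A⁆` and `-⁅X₁, B⁆` have the same commutator with `D`. -/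
lemma relC (b : Base D X0 X1 X2) (l : Level D X0 X1 X2 k P A B C) : ⁅X2, A⁆ = -C := by
  apply der_eq_neg
  refine eq_zero_of_lie_D b.isD (fun q => ?_) ?_
  · rw [Derivation.add_apply, bracket_E b.E2 l.EA, l.EC b, add_zero]
  rw [der_lie_add, l.DC b, der_jacobi, b.D2, l.DA, der_lie_neg, lie_fsmul, fsmul_lie, b.E2, l.EA,
    l.wA, ← l.hB]
  apply Derivation.ext
  intro a
  simp only [Derivation.neg_apply, Derivation.add_apply, Derivation.sub_apply,
    Derivation.smul_apply, Derivation.zero_apply, smul_eq_mul]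
  ring

lemma lowC (b : Base D X0 X1 X2) (l : Level D X0 X1 X2 k P A B C) (n : ℕ) (hn : 1 ≤ n)
    (hk : n ≤ 2 * k + 1) : C (uvar n) = 0 := by
  induction n, hn using Nat.le_induction with
  | base =>
    refine apply_uvar_one b.isD (l.EC b) ?_
    rw [l.DC b]; simp [l.EA, l.EB]
  | succ n hn ih =>
    rw [apply_uvar_succ b.isD C n hn, ih (by omega), l.DC b]
    simp [l.lowA n hn (by omega), l.lowB n hn (by omega)]

lemma topC (b : Base D X0 X1 X2) (l : Level D X0 X1 X2 k P A B C) :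
    C (uvar (2 * k + 2)) = 2 ^ (k + 1) := by
  have h1 : E (-1) * E 1 = 1 := by rw [E_mul_E, neg_add_cancel, E_zero]
  rw [apply_uvar_succ b.isD C _ (by omega), l.lowC b _ (by omega) le_rfl, l.DC b]
  simp only [map_zero, Derivation.add_apply, Derivation.neg_apply, Derivation.smul_apply,
    smul_eq_mul, l.topA, l.topB]
  linear_combination (2 * 2 ^ k : QP) * h1

/-- The passage from level `k` to level `k + 1`; `relA`, `relB` and `relC` simplify
`⁅X₁, ⁅D, C⁆⁆` and `⁅X₂, ⁅D, C⁆⁆`. -/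
lemma step (b : Base D X0 X1 X2) (l : Level D X0 X1 X2 k P A B C) :
    Level D X0 X1 X2 (k + 1) C (-⁅X1, C⁆) ⁅X2, C⁆ ⁅X1, ⁅X2, C⁆⁆ := by
  have EA' : ∀ q, (-⁅X1, C⁆) (E q) = 0 := fun q => by
    rw [Derivation.neg_apply, bracket_E b.E1 (l.EC b), neg_zero]
  have EB' : ∀ q, ⁅X2, C⁆ (E q) = 0 := bracket_E b.E2 (l.EC b)
  have DA' : ⁅D, -⁅X1, C⁆⁆ = -(E 1 • C) := by
    rw [der_lie_neg, der_jacobi, b.D1, l.DC b, der_lie_add, der_lie_neg, lie_fsmul, lie_fsmul,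
      der_neg_lie, fsmul_lie, l.wC b, l.EC b, b.E1, b.E1, l.relA b, ← l.hC]
    apply Derivation.ext
    intro a
    simp only [Derivation.neg_apply, Derivation.add_apply, Derivation.sub_apply,
      Derivation.smul_apply, Derivation.zero_apply, smul_eq_mul]
    ring
  have DB' : ⁅D, ⁅X2, C⁆⁆ = E (-1) • C := by
    rw [der_jacobi, b.D2, l.DC b, der_lie_add, der_lie_neg, lie_fsmul, lie_fsmul,
      fsmul_lie, l.wC b, l.EC b, b.E2, b.E2, l.relB b, l.relC b]
    apply Derivation.ext
    intro a
    simp only [Derivation.neg_apply, Derivation.add_apply, Derivation.sub_apply,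
      Derivation.smul_apply, Derivation.zero_apply, smul_eq_mul]
    ring
  have lowA' : ∀ n, 1 ≤ n → n ≤ 2 * (k + 1) → (-⁅X1, C⁆) (uvar n) = 0 := by
    intro n hn hk
    induction n, hn using Nat.le_induction with
    | base =>
      refine apply_uvar_one b.isD EA' ?_
      rw [DA', Derivation.neg_apply, Derivation.smul_apply, l.EC b, smul_zero, neg_zero]
    | succ n hn ih =>
      rw [apply_uvar_succ b.isD _ n hn, ih (by omega), DA', Derivation.neg_apply,
        Derivation.smul_apply, l.lowC b n hn (by omega), map_zero, smul_zero, neg_zero, sub_zero]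
  have lowB' : ∀ n, 1 ≤ n → n ≤ 2 * (k + 1) → ⁅X2, C⁆ (uvar n) = 0 := by
    intro n hn hk
    induction n, hn using Nat.le_induction with
    | base =>
      refine apply_uvar_one b.isD EB' ?_
      rw [DB', Derivation.smul_apply, l.EC b, smul_zero]
    | succ n hn ih =>
      rw [apply_uvar_succ b.isD _ n hn, ih (by omega), DB',
        Derivation.smul_apply, l.lowC b n hn (by omega), map_zero, smul_zero, sub_zero]
  refine ⟨rfl, rfl, rfl, EA', EB', ?_, ?_, DA', DB', lowA', lowB', ?_, ?_⟩
  · rw [der_lie_neg, der_jacobi, b.w1, l.wC b, der_lie_zero, add_zero]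
  · rw [der_jacobi, b.w2, l.wC b, der_lie_zero, add_zero, der_neg_lie]
  · rw [apply_uvar_succ b.isD _ _ (by omega), lowA' _ (by omega) le_rfl, DA', map_zero,
      Derivation.neg_apply, Derivation.smul_apply, show 2 * (k + 1) = 2 * k + 2 by ring, l.topC b,
      smul_eq_mul]
    ring
  · rw [apply_uvar_succ b.isD _ _ (by omega), lowB' _ (by omega) le_rfl, DB', map_zero,
      Derivation.smul_apply, show 2 * (k + 1) = 2 * k + 2 by ring, l.topC b, smul_eq_mul]
    ring

lemma ne_zero (b : Base D X0 X1 X2) (l : Level D X0 X1 X2 k P A B C) :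
    A ≠ 0 ∧ B ≠ 0 ∧ C ≠ 0 := by
  have h2 : ∀ m : ℕ, (2 : ℂ) ^ m ≠ 0 := fun m => pow_ne_zero m two_ne_zero
  have key : ∀ (m : ℕ) (q : ℤ), (2 : QP) ^ m * E q ≠ 0 := by
    intro m q h
    refine smul_ne_zero (h2 m) (E_ne_zero q) ?_
    rw [Algebra.smul_def, map_pow, map_ofNat, h]
  refine ⟨?_, ?_, ?_⟩
  · rintro rfl
    exact key k 1 l.topA.symm
  · rintro rfl
    exact key k (-1) (neg_eq_zero.mp l.topB.symm)
  · rintro rfl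
    apply key (k + 1) 0
    rw [E_zero, mul_one]
    exact (l.topC b).symm

end Level

/-! ### The initial derivations -/

lemma lie_X0_D {D X0 : Derivation ℂ QP QP} (hD : IsD D) (hX0 : IsX0 X0) : ⁅X0, D⁆ = 0 := by
  refine der_eq_zero _ (fun q => ?_) (fun n hn => ?_)
  · rw [Derivation.commutator_apply, hD.2, hX0.2, map_zsmul, map_zsmul, X0.leibniz,
      hX0.1 1 le_rfl, hD.2, hX0.2]
    simp only [smul_eq_mul, mul_zero, add_zero, mul_smul_comm, sub_self]
  · rw [Derivation.commutator_apply, hD.1 n hn, hX0.1 n hn, hX0.1 _ (by omega), map_zero, sub_zero]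

/-- `⁅X₀, X_{E q}⁆ = q X_{E q}`, because `X₀` commutes with `D`. -/
lemma lie_X0_Xf {D X0 X : Derivation ℂ QP QP} (hD : IsD D) (hX0 : IsX0 X0) (q : ℤ)
    (hX : IsXf D (E q) X) : ⁅X0, X⁆ = q • X := by
  have hc : ∀ f, X0 (D f) = D (X0 f) := fun f => by
    rw [← sub_eq_zero, ← Derivation.commutator_apply, lie_X0_D hD hX0]; rfl
  have hit : ∀ m : ℕ, X0 ((⇑D)^[m] (E q)) = q • (⇑D)^[m] (E q) := by
    intro m
    induction m with
    | zero => exact hX0.2 q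
    | succ m ih => rw [Function.iterate_succ_apply', hc, ih, map_zsmul]
  rw [← sub_eq_zero]
  refine der_eq_zero _ (fun p => ?_) (fun n hn => ?_)
  · rw [Derivation.sub_apply, Derivation.commutator_apply, Derivation.smul_apply, hX.1, hX0.2,
      map_zsmul, hX.1]
    simp
  · rw [Derivation.sub_apply, Derivation.commutator_apply, Derivation.smul_apply, hX.2 n hn,
      hX0.1 n hn, hit]
    simp

/-- `⁅D, X_f⁆ = -f X₀`. -/
lemma lie_D_Xf {D X0 X : Derivation ℂ QP QP} (hD : IsD D) (hX0 : IsX0 X0) (f : QP)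
    (hX : IsXf D f X) : ⁅D, X⁆ = -(f • X0) := by
  apply der_eq_neg
  refine der_eq_zero _ (fun p => ?_) (fun n hn => ?_)
  · rw [Derivation.add_apply, Derivation.commutator_apply, Derivation.smul_apply, hX.1, hX0.2,
      hD.2, map_zsmul, X.leibniz, hX.1, hX.2 1 le_rfl]
    simp only [smul_eq_mul, mul_zero, map_zero, zero_add, Function.iterate_zero, id_eq,
      zsmul_eq_mul, Nat.sub_self]
    ring
  · obtain ⟨m, rfl⟩ : ∃ m, n = m + 1 := ⟨n - 1, by omega⟩
    rw [Derivation.add_apply, Derivation.commutator_apply, Derivation.smul_apply, hX.2 _ hn,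
      hX0.1 _ hn, hD.1 _ hn, hX.2 _ (by omega), Nat.add_sub_cancel, Nat.add_sub_cancel,
      Function.iterate_succ_apply']
    simp

/-- For the sinh-Gordon sequence `X'₀ := X₀`, `X'₁ := X_{E 1}`, `X'₂ := -X_{E (-1)}`,
`X'₃ := ⁅X'₁, X'₂⁆` and, for `k ≥ 1`, `X'_{3k+1} := -⁅X'₁, X'_{3k}⁆`,
`X'_{3k+2} := ⁅X'₂, X'_{3k}⁆`, `X'_{3k+3} := ⁅X'₁, X'_{3k+2}⁆`:
for every `k ≥ 0` the derivations `X'_{3k+1}, X'_{3k+2}, X'_{3k+3}` are nonzero and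
`⁅D, X'_{3k+1}⁆ = -(E 1) • X'_{3k}`, `⁅D, X'_{3k+2}⁆ = (E (-1)) • X'_{3k}`,
`⁅D, X'_{3k+3}⁆ = -(E (-1)) • X'_{3k+1} + (E 1) • X'_{3k+2}`. -/
theorem stmt_7 (D X0 Xm : Derivation ℂ QP QP) (Xs : ℕ → Derivation ℂ QP QP)
    (hD : IsD D) (hX0 : IsX0 X0)
    (hXs1 : IsXf D (E 1) (Xs 1)) (hXm : IsXf D (E (-1)) Xm)
    (hXs0 : Xs 0 = X0) (hXs2 : Xs 2 = -Xm) (hXs3 : Xs 3 = ⁅Xs 1, Xs 2⁆)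
    (hrec : ∀ k : ℕ, 1 ≤ k →
      Xs (3 * k + 1) = -⁅Xs 1, Xs (3 * k)⁆ ∧
      Xs (3 * k + 2) = ⁅Xs 2, Xs (3 * k)⁆ ∧
      Xs (3 * k + 3) = ⁅Xs 1, Xs (3 * k + 2)⁆) :
    ∀ k : ℕ,
      (Xs (3 * k + 1) ≠ 0 ∧ Xs (3 * k + 2) ≠ 0 ∧ Xs (3 * k + 3) ≠ 0) ∧
      ⁅D, Xs (3 * k + 1)⁆ = -((E 1) • Xs (3 * k)) ∧
      ⁅D, Xs (3 * k + 2)⁆ = (E (-1)) • Xs (3 * k) ∧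
      ⁅D, Xs (3 * k + 3)⁆ = -((E (-1)) • Xs (3 * k + 1)) + (E 1) • Xs (3 * k + 2) := by
  have w1 : ⁅X0, Xs 1⁆ = Xs 1 := by rw [lie_X0_Xf hD hX0 1 hXs1, one_smul]
  have w2 : ⁅X0, Xs 2⁆ = -Xs 2 := by
    rw [hXs2, der_lie_neg, lie_X0_Xf hD hX0 (-1) hXm, neg_smul, one_smul]
  have E2 : ∀ q, Xs 2 (E q) = 0 := fun q => by rw [hXs2, Derivation.neg_apply, hXm.1, neg_zero]
  have b : Base D X0 (Xs 1) (Xs 2) :=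
    ⟨hD, hXs1.1, E2, w1, w2, lie_D_Xf hD hX0 _ hXs1, by
      rw [hXs2, der_lie_neg, lie_D_Xf hD hX0 _ hXm, der_neg_neg]⟩
  have main : ∀ k, Level D X0 (Xs 1) (Xs 2) k (Xs (3 * k)) (Xs (3 * k + 1)) (Xs (3 * k + 2))
      (Xs (3 * k + 3)) := by
    intro k
    induction k with
    | zero =>
      -- The recursion also holds at `k = 0`, since `X'₁` and `X'₂` have weights `1` and `-1`.
      refine ⟨?_, ?_, hXs3, hXs1.1, E2, w1, w2, ?_, ?_, ?_, ?_, ?_, ?_⟩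
      · rw [mul_zero, hXs0, der_lie_skew, w1]
      · rw [mul_zero, hXs0, ← der_lie_skew, w2, der_neg_neg]
      · rw [mul_zero, hXs0]; exact b.D1
      · rw [mul_zero, hXs0]; exact b.D2
      · intro n hn hn'; omega
      · intro n hn hn'; omega
      · have h := hXs1.2 1 le_rfl
        simpa using h
      · have h := hXm.2 1 le_rfl
        simp [hXs2, h]
    | succ k ih =>
      obtain ⟨rA, rB, rC⟩ := hrec (k + 1) (by omega)
      rw [rC, rB, rA]
      exact ih.step b
  intro k
  exact ⟨(main k).ne_zero b, (main k).DA, (main k).DB, (main k).DC b⟩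
end
end
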